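/- Fix matrices L1, S1, Z, D, Y1, Y2, Y3 ∈ ℝ^{n1×n2} and ρ > 0. The function (L2, S2) ↦ ⟨L1 − L2, Y1⟩ + (ρ/2)‖L1 − L2‖_F² + ⟨S1 − S2, Y2⟩ + (ρ/2)‖S1 − S2‖_F² + ⟨L2 + S2 + Z − D, Y3⟩ + (ρ/2)‖L2 + S2 + Z − D‖_F² over pairs of real n1×n2 matrices has a unique minimizer, given by L2 = (D − Z + 2L1 − S1 + (2Y1 − Y2 − Y3)/ρ)/3 and S2 = (D − Z + 2S1 − L1 + (2Y2 − Y1 − Y3)/ρ)/3. -/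

import Mathlib

open Matrix
open scoped BigOperators

/-- Frobenius norm of a real matrix. -/
noncomputable def frob {n1 n2 : ℕ} (A : Matrix (Fin n1) (Fin n2) ℝ) : ℝ :=
  Real.sqrt (∑ i, ∑ j, A i j ^ 2)

/-- Entrywise ℓ¹ norm. -/
noncomputable def l1norm {n1 n2 : ℕ} (A : Matrix (Fin n1) (Fin n2) ℝ) : ℝ :=
  ∑ i, ∑ j, |A i j|

/-- Trace inner product ⟨A,B⟩ = trace(AᵀB). -/
noncomputable def minner {n1 n2 : ℕ} (A B : Matrix (Fin n1) (Fin n2) ℝ) : ℝ :=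
  ∑ i, ∑ j, A i j * B i j

/-- Spectral norm (largest singular value), as the ℓ²→ℓ² operator norm. -/
noncomputable def spec {n1 n2 : ℕ} (A : Matrix (Fin n1) (Fin n2) ℝ) : ℝ :=
  sSup {c : ℝ | ∃ x : Fin n2 → ℝ, (∑ j, x j ^ 2) ≤ 1 ∧
    c = Real.sqrt (∑ i, (∑ j, A i j * x j) ^ 2)}

/-- Nuclear norm (sum of singular values), via duality with the spectral norm. -/
noncomputable def nuc {n1 n2 : ℕ} (A : Matrix (Fin n1) (Fin n2) ℝ) : ℝ :=
  sSup {c : ℝ | ∃ B : Matrix (Fin n1) (Fin n2) ℝ, spec B ≤ 1 ∧ c = minner A B}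

/-- P_Ω: the matrix agreeing with `M` on `Ω` and zero off `Ω`. -/
noncomputable def projS {n1 n2 : ℕ} (Ω : Finset (Fin n1 × Fin n2))
    (M : Matrix (Fin n1) (Fin n2) ℝ) : Matrix (Fin n1) (Fin n2) ℝ :=
  Matrix.of fun i j => if (i, j) ∈ Ω then M i j else 0

/-- Entrywise sign matrix. -/
noncomputable def signM {n1 n2 : ℕ} (A : Matrix (Fin n1) (Fin n2) ℝ) :
    Matrix (Fin n1) (Fin n2) ℝ :=
  Matrix.of fun i j => Real.sign (A i j)

/-- The tangent space T = {UQᵀ + RVᵀ}. -/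
def memT {n1 n2 r : ℕ} (U : Matrix (Fin n1) (Fin r) ℝ) (V : Matrix (Fin n2) (Fin r) ℝ)
    (M : Matrix (Fin n1) (Fin n2) ℝ) : Prop :=
  ∃ (Q : Matrix (Fin n2) (Fin r) ℝ) (R : Matrix (Fin n1) (Fin r) ℝ), M = U * Qᵀ + R * Vᵀ

/-- Membership in T⊥, the orthogonal complement of the tangent space. -/
def memTperp {n1 n2 r : ℕ} (U : Matrix (Fin n1) (Fin r) ℝ) (V : Matrix (Fin n2) (Fin r) ℝ)
    (W : Matrix (Fin n1) (Fin n2) ℝ) : Prop :=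
  ∀ M, memT U V M → minner W M = 0

/-- (L̂, Ŝ) is a global minimizer of the √PCP objective
`‖L‖_* + λ‖S‖₁ + μ‖L + S − D‖_F`. -/
def IsRootPCPMin {n1 n2 : ℕ} (D : Matrix (Fin n1) (Fin n2) ℝ) (lam mu : ℝ)
    (Lh Sh : Matrix (Fin n1) (Fin n2) ℝ) : Prop :=
  ∀ L S : Matrix (Fin n1) (Fin n2) ℝ,
    nuc Lh + lam * l1norm Sh + mu * frob (Lh + Sh - D) ≤
      nuc L + lam * l1norm S + mu * frob (L + S - D)

/-- (L̂, Ŝ) is a minimizer of StablePCP_c(δ):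
minimize `‖L‖_* + λ‖S‖₁` subject to `‖L + S − D‖_F ≤ δ`. -/
def IsStablePCPMin {n1 n2 : ℕ} (D : Matrix (Fin n1) (Fin n2) ℝ) (lam δ : ℝ)
    (Lh Sh : Matrix (Fin n1) (Fin n2) ℝ) : Prop :=
  frob (Lh + Sh - D) ≤ δ ∧
    ∀ L S : Matrix (Fin n1) (Fin n2) ℝ, frob (L + S - D) ≤ δ →
      nuc Lh + lam * l1norm Sh ≤ nuc L + lam * l1norm S

/-- Frobenius distance between pairs: ‖(L,S) − (L',S')‖_F. -/
noncomputable def pairDist {n1 n2 : ℕ} (L S L' S' : Matrix (Fin n1) (Fin n2) ℝ) : ℝ :=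
  Real.sqrt (frob (L - L') ^ 2 + frob (S - S') ^ 2)

/-- Sample space of the random sparsity model: a uniformly random support of
cardinality m together with iid uniform random signs. -/
abbrev SampleSpace (n1 n2 m : ℕ) : Type :=
  {Ω : Finset (Fin n1 × Fin n2) // Ω.card = m} × ((Fin n1 × Fin n2) → Bool)

/-- The sparse matrix S0 built from fixed magnitudes `a` and a random sample:
S0 vanishes off Ω and equals ±a on Ω according to the random signs. -/
noncomputable def sparseOf {n1 n2 m : ℕ} (a : Fin n1 × Fin n2 → ℝ) (ω : SampleSpace n1 n2 m) :
    Matrix (Fin n1) (Fin n2) ℝ :=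
  Matrix.of fun i j =>
    if (i, j) ∈ ω.1.1 then (if ω.2 (i, j) then a (i, j) else -a (i, j)) else 0

open Classical in
/-- Uniform probability of an event on a finite sample space. -/
noncomputable def unifProb {α : Type*} [Fintype α] (E : α → Prop) : ℝ :=
  ((Finset.univ.filter fun a => E a).card : ℝ) / (Fintype.card α : ℝ)

/-- The augmented-Lagrangian objective of the joint (L2, S2) ADMM update. -/
noncomputable def admmObj {n1 n2 : ℕ} (L1 S1 Z D Y1 Y2 Y3 : Matrix (Fin n1) (Fin n2) ℝ)
    (ρ : ℝ) (L2 S2 : Matrix (Fin n1) (Fin n2) ℝ) : ℝ :=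
  minner (L1 - L2) Y1 + (ρ / 2) * frob (L1 - L2) ^ 2 +
    minner (S1 - S2) Y2 + (ρ / 2) * frob (S1 - S2) ^ 2 +
    minner (L2 + S2 + Z - D) Y3 + (ρ / 2) * frob (L2 + S2 + Z - D) ^ 2

theorem frob_sq {n1 n2 : ℕ} (A : Matrix (Fin n1) (Fin n2) ℝ) :
    frob A ^ 2 = ∑ i, ∑ j, A i j ^ 2 :=
  Real.sq_sqrt (Finset.sum_nonneg fun _ _ => Finset.sum_nonneg fun _ _ => sq_nonneg _)

theorem eq_zero_of_frob_sq_nonpos {n1 n2 : ℕ} {A : Matrix (Fin n1) (Fin n2) ℝ}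
    (h : frob A ^ 2 ≤ 0) : A = 0 := by
  rw [frob_sq] at h
  have hrow : ∀ i, 0 ≤ ∑ j, A i j ^ 2 := fun i => Finset.sum_nonneg fun _ _ => sq_nonneg _
  have hzero := le_antisymm h (Finset.sum_nonneg fun i _ => hrow i)
  ext i j
  have hi := (Finset.sum_eq_zero_iff_of_nonneg fun i _ => hrow i).1 hzero i (Finset.mem_univ i)
  exact pow_eq_zero_iff two_ne_zero |>.1 <|
    (Finset.sum_eq_zero_iff_of_nonneg fun _ _ => sq_nonneg _).1 hi j (Finset.mem_univ j)

/-- Completing the square: if the gradient of the objective vanishes at `(L, S)`, the objective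
exceeds its value there by a positive definite quadratic form in the displacement. -/
theorem admmObj_eq_add_of_stationary {n1 n2 : ℕ}
    {L1 S1 Z D Y1 Y2 Y3 L S : Matrix (Fin n1) (Fin n2) ℝ} {ρ : ℝ}
    (hL : Y3 + ρ • (L + S + Z - D) = Y1 + ρ • (L1 - L))
    (hS : Y3 + ρ • (L + S + Z - D) = Y2 + ρ • (S1 - S))
    (L2 S2 : Matrix (Fin n1) (Fin n2) ℝ) :
    admmObj L1 S1 Z D Y1 Y2 Y3 ρ L2 S2 = admmObj L1 S1 Z D Y1 Y2 Y3 ρ L S +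
      ρ / 2 * (frob (L2 - L) ^ 2 + frob (S2 - S) ^ 2 + frob (L2 - L + (S2 - S)) ^ 2) := by
  simp only [admmObj, minner, frob_sq, Finset.mul_sum, ← Finset.sum_add_distrib]
  refine Finset.sum_congr rfl fun i _ => Finset.sum_congr rfl fun j _ => ?_
  have hLij := congrFun (congrFun hL i) j
  have hSij := congrFun (congrFun hS i) j
  simp only [Matrix.add_apply, Matrix.sub_apply, Matrix.smul_apply, smul_eq_mul] at hLij hSij ⊢
  linear_combination (L2 i j - L i j) * hLij + (S2 i j - S i j) * hSij

/-- the joint (L2, S2) ADMM update has the stated unique minimizer. -/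
theorem admm_update_minimizer {n1 n2 : ℕ}
    (L1 S1 Z D Y1 Y2 Y3 : Matrix (Fin n1) (Fin n2) ℝ) (ρ : ℝ) (hρ : 0 < ρ)
    (L2s S2s : Matrix (Fin n1) (Fin n2) ℝ)
    (hL2s : L2s = (3 : ℝ)⁻¹ •
      (D - Z + (2 : ℝ) • L1 - S1 + ρ⁻¹ • ((2 : ℝ) • Y1 - Y2 - Y3)))
    (hS2s : S2s = (3 : ℝ)⁻¹ •
      (D - Z + (2 : ℝ) • S1 - L1 + ρ⁻¹ • ((2 : ℝ) • Y2 - Y1 - Y3))) :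
    (∀ L2 S2 : Matrix (Fin n1) (Fin n2) ℝ,
      admmObj L1 S1 Z D Y1 Y2 Y3 ρ L2s S2s ≤ admmObj L1 S1 Z D Y1 Y2 Y3 ρ L2 S2) ∧
    (∀ L2 S2 : Matrix (Fin n1) (Fin n2) ℝ,
      (∀ L S : Matrix (Fin n1) (Fin n2) ℝ,
        admmObj L1 S1 Z D Y1 Y2 Y3 ρ L2 S2 ≤ admmObj L1 S1 Z D Y1 Y2 Y3 ρ L S) →
      L2 = L2s ∧ S2 = S2s) := by
  have hL : Y3 + ρ • (L2s + S2s + Z - D) = Y1 + ρ • (L1 - L2s) := by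
    ext i j
    simp only [hL2s, hS2s, Matrix.add_apply, Matrix.sub_apply, Matrix.smul_apply, smul_eq_mul]
    field_simp
    ring
  have hS : Y3 + ρ • (L2s + S2s + Z - D) = Y2 + ρ • (S1 - S2s) := by
    ext i j
    simp only [hL2s, hS2s, Matrix.add_apply, Matrix.sub_apply, Matrix.smul_apply, smul_eq_mul]
    field_simp
    ring
  have hobj := admmObj_eq_add_of_stationary hL hS
  refine ⟨fun L2 S2 => ?_, fun L2 S2 hmin => ?_⟩
  · rw [hobj L2 S2]
    exact le_add_of_nonneg_right (by positivity)
  · have hle := hmin L2s S2s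
    rw [hobj L2 S2, add_le_iff_nonpos_right] at hle
    have hsum := nonpos_of_mul_nonpos_right hle (half_pos hρ)
    have h₁ := sq_nonneg (frob (L2 - L2s))
    have h₂ := sq_nonneg (frob (S2 - S2s))
    have h₃ := sq_nonneg (frob (L2 - L2s + (S2 - S2s)))
    exact ⟨sub_eq_zero.1 (eq_zero_of_frob_sq_nonpos (by linarith)),
      sub_eq_zero.1 (eq_zero_of_frob_sq_nonpos (by linarith))⟩
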